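/- Let G be a simple graph on vertex set V = {0,...,n-1} with edge weights wt : E(G) → ℝ≥0, let k ≥ 1, and let f : V → {0,...,4k²-1}. Suppose M is a maximum-weight k-matching of G and f is injective on the set V(M) of vertices covered by M. Then Compact(G,f) contains a nice k-matching M' (with respect to f) with wt(M') = wt(M); in particular, Compact(G,f) contains a maximum-weight k-matching of G. -/

import Mathlib

open Finset
open Classical

/-- An edge is a pair `(u, v)` of vertices with `u < v`.  A set `M` of edges
is a matching if no two distinct edges of `M` share an endpoint. -/
def IsMatchingE (M : Finset (ℕ × ℕ)) : Prop :=
  ∀ e ∈ M, ∀ e' ∈ M, e ≠ e' →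
    e.1 ≠ e'.1 ∧ e.1 ≠ e'.2 ∧ e.2 ≠ e'.1 ∧ e.2 ≠ e'.2

/-- `M` is a `k`-matching of the graph with edge set `H`. -/
def IsKMatchingE (H M : Finset (ℕ × ℕ)) (k : ℕ) : Prop :=
  M ⊆ H ∧ M.card = k ∧ IsMatchingE M

/-- The weight of a set of edges. -/
noncomputable def mweight (wt : ℕ × ℕ → ℝ) (M : Finset (ℕ × ℕ)) : ℝ :=
  ∑ e ∈ M, wt e

/-- The set of vertices covered by a set of edges. -/
def coveredE (M : Finset (ℕ × ℕ)) : Set ℕ := {v | ∃ e ∈ M, v = e.1 ∨ v = e.2}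

/-- A matching is nice w.r.t. `f` if no two covered vertices lie in the same
part (preimage of a value of `f`). -/
def NiceE (f : ℕ → ℕ) (M : Finset (ℕ × ℕ)) : Prop := Set.InjOn f (coveredE M)

/-- The strict order `≺` on edges: `e ≺ e'` iff `β e = (wt e, e.1, e.2)` is
lexicographically smaller than `β e'`. -/
def edgeLT (wt : ℕ × ℕ → ℝ) (e e' : ℕ × ℕ) : Prop :=
  wt e < wt e' ∨ (wt e = wt e' ∧ (e.1 < e'.1 ∨ (e.1 = e'.1 ∧ e.2 < e'.2)))

/-- `CompactG wt f H` : the subgraph of `H` consisting of every edge whose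
endpoints lie in distinct parts of `f` and whose `β`-value is maximum among
the edges of `H` between those two parts. -/
noncomputable def CompactG (wt : ℕ × ℕ → ℝ) (f : ℕ → ℕ)
    (H : Finset (ℕ × ℕ)) : Finset (ℕ × ℕ) :=
  H.filter (fun e => f e.1 ≠ f e.2 ∧
    ∀ e' ∈ H, ({f e'.1, f e'.2} : Finset ℕ) = {f e.1, f e.2} → ¬ edgeLT wt e e')

/-- `RedComG wt f k H` : from `CompactG wt f H` keep each edge that is among
the `8k` `β`-heaviest edges incident to (vertices of) the part of each of its
endpoints, and then keep only the `q = k(16k-1)` `β`-heaviest of those. -/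
noncomputable def RedComG (wt : ℕ × ℕ → ℝ) (f : ℕ → ℕ) (k : ℕ)
    (H : Finset (ℕ × ℕ)) : Finset (ℕ × ℕ) :=
  let C := CompactG wt f H
  let R1 := C.filter (fun e =>
    (C.filter (fun e' => (f e'.1 = f e.1 ∨ f e'.2 = f e.1) ∧
      edgeLT wt e e')).card < 8 * k ∧
    (C.filter (fun e' => (f e'.1 = f e.2 ∨ f e'.2 = f e.2) ∧
      edgeLT wt e e')).card < 8 * k)
  R1.filter (fun e => (R1.filter (fun e' => edgeLT wt e e')).card < k * (16 * k - 1))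

/-!
Contract every part of `f` to a point. A loopless matching covering each part at most once becomes a
matching of the quotient, and conversely any edge set that maps injectively onto a matching of the
quotient is a matching covering each part at most once. Replacing each edge of `M` by the
`≺`-largest edge of `G` between the same two parts leaves the image in the quotient unchanged, lands
in `CompactG wt f G`, and does not decrease the weight; maximality of `M` gives equality.
-/

section Parts

variable {α β : Type*} [DecidableEq β] {f : α → β} {M : Finset (α × α)} {e : α × α}

/-- The image of the edge `e` in the quotient by `f`: the set of the (at most two) parts containing
an endpoint of `e`, each part being represented by its value of `f`. -/
def partPair (f : α → β) (e : α × α) : Finset β := {f e.1, f e.2}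

theorem fst_mem_partPair : f e.1 ∈ partPair f e := mem_insert_self _ _

theorem snd_mem_partPair : f e.2 ∈ partPair f e := mem_insert_of_mem (mem_singleton_self _)

theorem card_partPair_eq_two_iff : (partPair f e).card = 2 ↔ f e.1 ≠ f e.2 :=
  ⟨fun h heq => by simp [partPair, heq] at h, card_pair⟩

/-- The edges in `M` map injectively onto a matching, without loops, of the quotient graph whose
vertices are the parts of `f`. -/
structure IsPartMatching (f : α → β) (M : Finset (α × α)) : Prop where
  ne : ∀ e ∈ M, f e.1 ≠ f e.2
  pairwiseDisjoint : (M : Set (α × α)).PairwiseDisjoint (partPair f)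

theorem IsPartMatching.eq_of_mem_partPair (hM : IsPartMatching f M) {e e' : α × α} (he : e ∈ M)
    (he' : e' ∈ M) {a : β} (ha : a ∈ partPair f e) (ha' : a ∈ partPair f e') : e = e' :=
  hM.pairwiseDisjoint.elim_finset he he' a ha ha'

theorem IsPartMatching.injOn_of_partPair_eq (hM : IsPartMatching f M) {g : α × α → α × α}
    (hg : ∀ e ∈ M, partPair f (g e) = partPair f e) : Set.InjOn g M := fun e he e' he' h =>
  hM.eq_of_mem_partPair he he' fst_mem_partPair <| by
    rw [← hg e' he', ← h, hg e he]
    exact fst_mem_partPair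

theorem IsPartMatching.image [DecidableEq α] (hM : IsPartMatching f M) {g : α × α → α × α}
    (hg : ∀ e ∈ M, partPair f (g e) = partPair f e) : IsPartMatching f (M.image g) where
  ne := forall_mem_image.2 fun e he => by
    rw [← card_partPair_eq_two_iff, hg e he, card_partPair_eq_two_iff]
    exact hM.ne e he
  pairwiseDisjoint := by
    rw [coe_image]
    rintro _ ⟨e, he, rfl⟩ _ ⟨e', he', rfl⟩ hne
    rw [Function.onFun, hg e he, hg e' he']
    exact hM.pairwiseDisjoint he he' (ne_of_apply_ne g hne)

end Parts

section Compact

variable {wt : ℕ × ℕ → ℝ} {f : ℕ → ℕ} {H M S : Finset (ℕ × ℕ)} {e e' : ℕ × ℕ}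

theorem fst_mem_coveredE (he : e ∈ M) : e.1 ∈ coveredE M := ⟨e, he, Or.inl rfl⟩

theorem snd_mem_coveredE (he : e ∈ M) : e.2 ∈ coveredE M := ⟨e, he, Or.inr rfl⟩

theorem NiceE.isPartMatching (hf : NiceE f M) (hM : IsMatchingE M) (hloop : ∀ e ∈ M, e.1 ≠ e.2) :
    IsPartMatching f M where
  ne e he := hf.ne (fst_mem_coveredE he) (snd_mem_coveredE he) (hloop e he)
  pairwiseDisjoint e he e' he' hne := by
    obtain ⟨h₁₁, h₁₂, h₂₁, h₂₂⟩ := hM e he e' he' hne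
    simp only [Function.onFun, partPair, disjoint_insert_left, disjoint_singleton_left, mem_insert,
      mem_singleton, not_or]
    exact ⟨⟨hf.ne (fst_mem_coveredE he) (fst_mem_coveredE he') h₁₁,
        hf.ne (fst_mem_coveredE he) (snd_mem_coveredE he') h₁₂⟩,
      hf.ne (snd_mem_coveredE he) (fst_mem_coveredE he') h₂₁,
      hf.ne (snd_mem_coveredE he) (snd_mem_coveredE he') h₂₂⟩

theorem IsPartMatching.isMatchingE (hM : IsPartMatching f M) : IsMatchingE M := by
  intro e he e' he' hne
  have ne_of_mem {v w : ℕ} (hv : f v ∈ partPair f e) (hw : f w ∈ partPair f e') : v ≠ w := by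
    rintro rfl
    exact hne (hM.eq_of_mem_partPair he he' hv hw)
  exact ⟨ne_of_mem fst_mem_partPair fst_mem_partPair, ne_of_mem fst_mem_partPair snd_mem_partPair,
    ne_of_mem snd_mem_partPair fst_mem_partPair, ne_of_mem snd_mem_partPair snd_mem_partPair⟩

theorem IsPartMatching.niceE (hM : IsPartMatching f M) : NiceE f M := by
  rintro v ⟨e, he, hv⟩ w ⟨e', he', hw⟩ hvw
  have hve : f v ∈ partPair f e := by
    rcases hv with rfl | rfl
    exacts [fst_mem_partPair, snd_mem_partPair]
  have hwe' : f w ∈ partPair f e' := by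
    rcases hw with rfl | rfl
    exacts [fst_mem_partPair, snd_mem_partPair]
  obtain rfl : e = e' := hM.eq_of_mem_partPair he he' hve (hvw ▸ hwe')
  have hne := hM.ne e he
  rcases hv with rfl | rfl <;> rcases hw with rfl | rfl
  exacts [rfl, absurd hvw hne, absurd hvw.symm hne, rfl]

theorem edgeLT_iff_toLex_lt :
    edgeLT wt e e' ↔ toLex (wt e, toLex e) < toLex (wt e', toLex e') := by
  simp only [edgeLT, Prod.Lex.toLex_lt_toLex]

theorem le_of_not_edgeLT (h : ¬ edgeLT wt e e') : wt e' ≤ wt e :=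
  not_lt.1 fun hlt => h (Or.inl hlt)

theorem exists_mem_forall_not_edgeLT (wt : ℕ × ℕ → ℝ) (hS : S.Nonempty) :
    ∃ g ∈ S, ∀ e ∈ S, ¬ edgeLT wt g e := by
  obtain ⟨g, hg, hmax⟩ := S.exists_max_image (fun e => toLex (wt e, toLex e)) hS
  exact ⟨g, hg, fun e he hlt => (hmax e he).not_gt (edgeLT_iff_toLex_lt.1 hlt)⟩

theorem mem_compactG : e ∈ CompactG wt f H ↔ e ∈ H ∧ f e.1 ≠ f e.2 ∧
    ∀ e' ∈ H, partPair f e' = partPair f e → ¬ edgeLT wt e e' :=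
  mem_filter

theorem compactG_subset : CompactG wt f H ⊆ H := filter_subset _ _

theorem exists_mem_compactG_partPair_eq (wt : ℕ × ℕ → ℝ) (he : e ∈ H) (hne : f e.1 ≠ f e.2) :
    ∃ g ∈ CompactG wt f H, partPair f g = partPair f e ∧ wt e ≤ wt g := by
  have hS : (H.filter fun e' => partPair f e' = partPair f e).Nonempty :=
    ⟨e, mem_filter.2 ⟨he, rfl⟩⟩
  obtain ⟨g, hg, hmax⟩ := exists_mem_forall_not_edgeLT wt hS
  obtain ⟨hgH, hge⟩ := mem_filter.1 hg
  have hgne : f g.1 ≠ f g.2 := by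
    rwa [← card_partPair_eq_two_iff, hge, card_partPair_eq_two_iff]
  refine ⟨g, mem_compactG.2 ⟨hgH, hgne, fun e' he' h => ?_⟩, hge, ?_⟩
  · exact hmax e' (mem_filter.2 ⟨he', h.trans hge⟩)
  · exact le_of_not_edgeLT (hmax e (mem_filter.2 ⟨he, rfl⟩))

theorem IsPartMatching.exists_subset_compactG (wt : ℕ × ℕ → ℝ) (hM : IsPartMatching f M)
    (hMH : M ⊆ H) :
    ∃ M' ⊆ CompactG wt f H, M'.card = M.card ∧ IsPartMatching f M' ∧
      mweight wt M ≤ mweight wt M' := by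
  choose! g hgC hgpair hgwt using fun e (he : e ∈ M) =>
    exists_mem_compactG_partPair_eq wt (hMH he) (hM.ne e he)
  have hinj : Set.InjOn g M := hM.injOn_of_partPair_eq hgpair
  refine ⟨M.image g, image_subset_iff.2 hgC, card_image_of_injOn hinj, hM.image hgpair, ?_⟩
  calc mweight wt M ≤ ∑ e ∈ M, wt (g e) := sum_le_sum hgwt
    _ = mweight wt (M.image g) := (sum_image hinj).symm

end Compact

theorem stmt10_general {k : ℕ} {wt : ℕ × ℕ → ℝ} {E : Finset (ℕ × ℕ)} {f : ℕ → ℕ}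
    {M : Finset (ℕ × ℕ)} (hloop : ∀ e ∈ M, e.1 ≠ e.2) (hM : IsKMatchingE E M k)
    (hMmax : ∀ M', IsKMatchingE E M' k → mweight wt M' ≤ mweight wt M) (hf : NiceE f M) :
    ∃ M' : Finset (ℕ × ℕ),
      IsKMatchingE (CompactG wt f E) M' k ∧ NiceE f M' ∧
      mweight wt M' = mweight wt M ∧
      ∀ M'', IsKMatchingE E M'' k → mweight wt M'' ≤ mweight wt M' := by
  obtain ⟨hME, hcard, hmatch⟩ := hM
  obtain ⟨M', hM'C, hcard', hM', hle⟩ :=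
    (hf.isPartMatching hmatch hloop).exists_subset_compactG wt hME
  have hM'k : IsKMatchingE (CompactG wt f E) M' k := ⟨hM'C, hcard'.trans hcard, hM'.isMatchingE⟩
  have hge : mweight wt M' ≤ mweight wt M := hMmax M' ⟨hM'C.trans compactG_subset, hM'k.2⟩
  exact ⟨M', hM'k, hM'.niceE, hge.antisymm hle, fun M'' hM'' => (hMmax M'' hM'').trans hle⟩

/- **Statement 10.** Let `G` be a simple graph on `{0,…,n-1}` with nonnegative
edge weights, `k ≥ 1`, `f : V → {0,…,4k²-1}`.  If `M` is a maximum-weight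
`k`-matching of `G` and `f` is injective on the vertices covered by `M`, then
`CompactG wt f G` contains a nice `k`-matching `M'` with `wt M' = wt M`; in
particular it contains a maximum-weight `k`-matching of `G`. -/
theorem stmt10 (n k : ℕ) (hk : 1 ≤ k)
    (wt : ℕ × ℕ → ℝ) (hwt : ∀ e, 0 ≤ wt e)
    (E : Finset (ℕ × ℕ)) (hE : ∀ e ∈ E, e.1 < e.2 ∧ e.2 < n)
    (f : ℕ → ℕ) (hf : ∀ v, v < n → f v < 4 * k ^ 2)
    (M : Finset (ℕ × ℕ)) (hM : IsKMatchingE E M k)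
    (hMmax : ∀ M', IsKMatchingE E M' k → mweight wt M' ≤ mweight wt M)
    (hinj : Set.InjOn f (coveredE M)) :
    ∃ M' : Finset (ℕ × ℕ),
      IsKMatchingE (CompactG wt f E) M' k ∧ NiceE f M' ∧
      mweight wt M' = mweight wt M ∧
      ∀ M'', IsKMatchingE E M'' k → mweight wt M'' ≤ mweight wt M' :=
  stmt10_general (fun e he => (hE e (hM.1 he)).1.ne) hM hMmax hinj
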